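/- Average ℓ₁ closeness of single coordinates after conditioning (classical form of condition 1 of the key lemma of the direct product theorem): Let X₁, …, X_n and 𝒜 be finite nonempty types, let Qᵢ be a probability distribution on Xᵢ for each i, and let P be a probability distribution on (X₁ × ⋯ × X_n) × 𝒜 whose marginal on X₁ × ⋯ × X_n equals the product Q₁ ⊗ ⋯ ⊗ Q_n. Let E be a subset of (X₁ × ⋯ × X_n) × 𝒜 with P(E) = γ > 0, let P' be P conditioned on E, and let C ⊆ {1,…,n} with |C| ≤ n/2. Writing R = ((Xᵢ)_{i ∈ C}, 𝒜) for the combined register consisting of the coordinates in C together with 𝒜, and δ = (ln|𝒜| + ln(1/γ))/n, we have (1/(n − |C|)) · ∑_{i ∉ C} ‖P'_{Xᵢ R} − Qᵢ ⊗ P'_R‖₁ ≤ 2·√δ. -/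

import Mathlib

open scoped Classical

/-!
The argument is the chain rule for relative entropy followed by Pinsker's inequality. Let `p` be a
distribution on `(∏ Xᵢ) × A`, let `R` be the register `((Xᵢ)_{i ∈ C}, A)` and let `r` be a
distribution on `A`. Compare `p` with the law `W` under which `R` is distributed as
`⨂_{i ∈ C} Qᵢ ⊗ r` and, given `R`, the coordinates outside `C` are independent with the conditional
laws `p_{Xᵢ | R}`. Pointwise
`log (p / (⨂ Qᵢ ⊗ r)) = ∑_{i ∉ C} log (p_{Xᵢ R} / (Qᵢ ⊗ p_R)) + log (p / W)`,
and the last term has nonnegative `p`-average by Gibbs' inequality, so the relative entropies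
`D(p_{Xᵢ R} ‖ Qᵢ ⊗ p_R)`, `i ∉ C`, add up to at most `D(p ‖ ⨂ Qᵢ ⊗ r)`. For uniform `r` and a `p`
obtained by conditioning on an event of probability `γ`, the density `p / (⨂ Qᵢ ⊗ r)` is bounded by
`|A| / γ`. Pinsker's inequality and Cauchy–Schwarz turn this into the bound on `ℓ₁` distances.
-/

section

open Finset Real InformationTheory

section RelEntropy

variable {S : Type*} [Fintype S] {p q : S → ℝ}

/-- The relative entropy (Kullback–Leibler divergence) `D(p ‖ q)`, in nats, of real-valued functions
on a finite type. A point with `q s = 0 < p s` contributes `0` instead of `∞`, as `x / 0 = 0` and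
`log 0 = 0`, so absolute continuity `∀ s, q s = 0 → p s = 0` has to be assumed separately. -/
noncomputable def relEntropy (p q : S → ℝ) : ℝ := ∑ s, p s * log (p s / q s)

lemma mul_klFun_div {a b : ℝ} (h : b = 0 → a = 0) :
    b * klFun (a / b) = a * log (a / b) + b - a := by
  rcases eq_or_ne b 0 with hb | hb
  · simp [hb, h hb]
  · rw [klFun_apply]
    field_simp

lemma sum_mul_klFun_div (h : ∀ s, q s = 0 → p s = 0) :
    ∑ s, q s * klFun (p s / q s) = relEntropy p q + ∑ s, q s - ∑ s, p s := by
  simp_rw [mul_klFun_div (h _), relEntropy, sum_sub_distrib, sum_add_distrib]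

lemma relEntropy_nonneg_of_sum_le (hp : ∀ s, 0 ≤ p s) (hq : ∀ s, 0 ≤ q s)
    (h : ∀ s, q s = 0 → p s = 0) (hqp : ∑ s, q s ≤ ∑ s, p s) : 0 ≤ relEntropy p q := by
  have hkl : 0 ≤ ∑ s, q s * klFun (p s / q s) :=
    sum_nonneg fun s _ => mul_nonneg (hq s) (klFun_nonneg (div_nonneg (hp s) (hq s)))
  rw [sum_mul_klFun_div h] at hkl
  linarith

lemma relEntropy_le_log_of_le_mul (hp : p ∈ stdSimplex ℝ S) (hq : ∀ s, 0 ≤ q s) {c : ℝ}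
    (hc : ∀ s, p s ≤ c * q s) : relEntropy p q ≤ log c := by
  calc relEntropy p q ≤ ∑ s, p s * log c := by
        refine sum_le_sum fun s _ => ?_
        rcases (hp.1 s).eq_or_lt with hps | hps
        · simp [← hps]
        have hqs : 0 < q s := (hq s).lt_of_ne' fun h => by simpa [h] using hps.trans_le (hc s)
        gcongr
        exact (div_le_iff₀ hqs).2 (hc s)
    _ = log c := by rw [← sum_mul, hp.2, one_mul]

lemma two_mul_sub_one_le_mul_log {t : ℝ} (ht : 1 ≤ t) : 2 * (t - 1) ≤ (t + 1) * log t := by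
  have h := le_log_one_add_of_nonneg (sub_nonneg.2 ht)
  rw [div_le_iff₀ (by linarith)] at h
  ring_nf at h ⊢
  exact h

lemma mul_log_le_two_mul_sub_one {t : ℝ} (ht0 : 0 < t) (ht1 : t ≤ 1) :
    (t + 1) * log t ≤ 2 * (t - 1) := by
  have h := mul_le_mul_of_nonneg_left (two_mul_sub_one_le_mul_log ((one_le_inv₀ ht0).2 ht1)) ht0.le
  rw [log_inv] at h
  field_simp at h
  linarith

-- The derivative of `(2 t + 4) klFun t - 3 (t - 1) ^ 2` is `4 ((t + 1) log t - 2 (t - 1))`, which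
-- has the sign of `t - 1`, so the minimum is the value `0` at `t = 1`.
lemma three_mul_sq_sub_one_le_mul_klFun {t : ℝ} (ht : 0 ≤ t) :
    3 * (t - 1) ^ 2 ≤ (2 * t + 4) * klFun t := by
  let f : ℝ → ℝ := fun t => (2 * t + 4) * klFun t - 3 * (t - 1) ^ 2
  have hcont : Continuous f := by have := continuous_klFun; fun_prop
  have hderiv {s : ℝ} (hs : 0 < s) : HasDerivAt f (4 * ((s + 1) * log s - 2 * (s - 1))) s := by
    have hlin := ((hasDerivAt_id' s).const_mul 2).add_const 4
    have hsq := (((hasDerivAt_id' s).sub_const 1).pow 2).const_mul 3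
    refine ((hlin.mul (hasDerivAt_klFun hs.ne')).sub hsq).congr_deriv ?_
    simp only [klFun_apply]
    ring
  have hf1 : f 1 = 0 := by simp [f, klFun_one]
  suffices hf : f 1 ≤ f t by simp only [f, hf1] at hf ⊢; linarith
  rcases le_total t 1 with ht1 | ht1
  · refine antitoneOn_of_hasDerivWithinAt_nonpos (convex_Icc 0 1) hcont.continuousOn
      (f' := fun s => 4 * ((s + 1) * log s - 2 * (s - 1))) ?_ ?_ ⟨ht, ht1⟩ ⟨zero_le_one, le_rfl⟩ ht1
    all_goals rw [interior_Icc]; rintro s ⟨hs0, hs1⟩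
    · exact (hderiv hs0).hasDerivWithinAt
    · linarith [mul_log_le_two_mul_sub_one hs0 hs1.le]
  · refine monotoneOn_of_hasDerivWithinAt_nonneg (convex_Ici 1) hcont.continuousOn
      (f' := fun s => 4 * ((s + 1) * log s - 2 * (s - 1))) ?_ ?_ Set.self_mem_Ici ht1 ht1
    all_goals rw [interior_Ici]; intro s (hs : 1 < s)
    · exact (hderiv (one_pos.trans hs)).hasDerivWithinAt
    · linarith [two_mul_sub_one_le_mul_log hs.le]

lemma sq_sub_le_mul_klFun_div {a b : ℝ} (ha : 0 ≤ a) (hb : 0 ≤ b) (h : b = 0 → a = 0) :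
    (a - b) ^ 2 ≤ (2 * a + 4 * b) / 3 * (b * klFun (a / b)) := by
  rcases eq_or_ne b 0 with hb0 | hb0
  · simp [hb0, h hb0]
  have key := mul_le_mul_of_nonneg_left
    (three_mul_sq_sub_one_le_mul_klFun (div_nonneg ha hb)) (sq_nonneg b)
  have hlhs : b ^ 2 * (3 * (a / b - 1) ^ 2) = 3 * (a - b) ^ 2 := by field_simp
  have hrhs : b ^ 2 * ((2 * (a / b) + 4) * klFun (a / b)) =
      (2 * a + 4 * b) * (b * klFun (a / b)) := by field_simp
  linarith

theorem sq_sum_abs_sub_le_two_mul_relEntropy (hp : p ∈ stdSimplex ℝ S) (hq : q ∈ stdSimplex ℝ S)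
    (h : ∀ s, q s = 0 → p s = 0) : (∑ s, |p s - q s|) ^ 2 ≤ 2 * relEntropy p q := by
  calc (∑ s, |p s - q s|) ^ 2
      ≤ (∑ s, (2 * p s + 4 * q s) / 3) * ∑ s, q s * klFun (p s / q s) := by
        refine sum_sq_le_sum_mul_sum_of_sq_le_mul _ (fun s _ => ?_) (fun s _ => ?_) fun s _ => ?_
        · linarith [hp.1 s, hq.1 s]
        · exact mul_nonneg (hq.1 s) (klFun_nonneg (div_nonneg (hp.1 s) (hq.1 s)))
        · rw [sq_abs]
          exact sq_sub_le_mul_klFun_div (hp.1 s) (hq.1 s) (h s)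
    _ = 2 * relEntropy p q := by
        rw [sum_mul_klFun_div h, ← sum_div, sum_add_distrib, ← mul_sum, ← mul_sum, hp.2, hq.2]
        ring

end RelEntropy

section Pushforward

variable {S T U : Type*} {p : S → ℝ}

section Finite

variable [Finite S]

lemma le_funOnFiniteMap_apply [Finite T] (f : S → T) (hp : ∀ s, 0 ≤ p s) (s : S) :
    p s ≤ FunOnFinite.map f p (f s) := by
  have := Fintype.ofFinite S
  rw [FunOnFinite.map_apply_apply]
  exact single_le_sum (fun s _ => hp s) (mem_filter.2 ⟨mem_univ s, rfl⟩)

lemma funOnFiniteMap_apply_eq_zero [Finite T] {f : S → T} {t : T} (h : ∀ s, f s = t → p s = 0) :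
    FunOnFinite.map f p t = 0 := by
  have := Fintype.ofFinite S
  rw [FunOnFinite.map_apply_apply]
  exact sum_eq_zero fun s hs => h s (mem_filter.1 hs).2

lemma sum_funOnFiniteMap_prodMk [Fintype T] [Finite U] (f : S → T) (g : S → U) (p : S → ℝ) (u : U) :
    ∑ t, FunOnFinite.map (fun s => (f s, g s)) p (t, u) = FunOnFinite.map g p u := by
  have := Fintype.ofFinite S
  simp_rw [FunOnFinite.map_apply_apply, Prod.mk.injEq, sum_filter]
  rw [sum_comm]
  simp [ite_and]

end Finite

variable [Fintype S] [Fintype T]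

lemma sum_funOnFiniteMap_mul (f : S → T) (p : S → ℝ) (F : T → ℝ) :
    ∑ t, FunOnFinite.map f p t * F t = ∑ s, p s * F (f s) := by
  simp_rw [FunOnFinite.map_apply_apply, sum_mul]
  rw [← sum_fiberwise univ f]
  refine sum_congr rfl fun t _ => sum_congr rfl fun s hs => ?_
  rw [(mem_filter.1 hs).2]

lemma relEntropy_funOnFiniteMap (f : S → T) (p : S → ℝ) (q : T → ℝ) :
    relEntropy (FunOnFinite.map f p) q =
      ∑ s, p s * log (FunOnFinite.map f p (f s) / q (f s)) :=
  sum_funOnFiniteMap_mul f p _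

lemma funOnFiniteMap_mem_stdSimplex (f : S → T) (hp : p ∈ stdSimplex ℝ S) :
    FunOnFinite.map f p ∈ stdSimplex ℝ T :=
  stdSimplex.image_linearMap f ⟨p, hp, rfl⟩

lemma mul_mem_stdSimplex {f : S → ℝ} {g : T → ℝ} (hf : f ∈ stdSimplex ℝ S)
    (hg : g ∈ stdSimplex ℝ T) :
    (fun z : S × T => f z.1 * g z.2) ∈ stdSimplex ℝ (S × T) :=
  ⟨fun z => mul_nonneg (hf.1 z.1) (hg.1 z.2), by
    rw [Fintype.sum_prod_type, ← Fintype.sum_mul_sum, hf.2, hg.2, one_mul]⟩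

end Pushforward

section Conditioning

variable {S : Type*} {P : S → ℝ} {E : Set S} {γ : ℝ}

/-- The distribution `P` conditioned on the event `E`. The normalizing constant `γ = P(E)` is an
argument rather than computed from `P` and `E`. -/
noncomputable def condOn (P : S → ℝ) (E : Set S) (γ : ℝ) (s : S) : ℝ :=
  if s ∈ E then P s / γ else 0

lemma condOn_mem_stdSimplex [Fintype S] (hP : ∀ s, 0 ≤ P s) (hγ : 0 < γ)
    (hPE : ∑ s, (if s ∈ E then P s else 0) = γ) : condOn P E γ ∈ stdSimplex ℝ S := by
  refine ⟨fun s => ?_, ?_⟩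
  · rw [condOn]
    split_ifs
    exacts [div_nonneg (hP s) hγ.le, le_rfl]
  · calc ∑ s, condOn P E γ s
        = (∑ s, if s ∈ E then P s else 0) / γ := by simp_rw [condOn, sum_div, ite_div, zero_div]
      _ = 1 := by rw [hPE, div_self hγ.ne']

lemma mul_condOn_le (hP : ∀ s, 0 ≤ P s) (hγ : 0 < γ) (s : S) : γ * condOn P E γ s ≤ P s := by
  rw [condOn]
  split_ifs
  · rw [mul_div_cancel₀ _ hγ.ne']
  · simpa using hP s

end Conditioning

lemma one_div_mul_le_two_mul_sqrt_div {T L m n : ℝ} (hn : 0 ≤ n) (hnm : n / 2 ≤ m) (hmn : m ≤ n)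
    (hT : T ≤ √(2 * m * L)) : 1 / m * T ≤ 2 * √(L / n) := by
  rcases hn.eq_or_lt with rfl | hn
  · simp [hmn.antisymm (by simpa using hnm)]
  have hm : 0 < m := (half_pos hn).trans_le hnm
  rw [one_div, inv_mul_le_iff₀ hm]
  rcases le_total L 0 with hL | hL
  · rw [sqrt_eq_zero_of_nonpos (mul_nonpos_of_nonneg_of_nonpos (by positivity) hL)] at hT
    exact hT.trans (by positivity)
  refine hT.trans (sqrt_le_iff.2 ⟨by positivity, ?_⟩)
  calc 2 * m * L = 4 * m * (n / 2) * (L / n) := by field_simp; ring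
    _ ≤ 4 * m * m * (L / n) := by gcongr
    _ = (m * (2 * √(L / n))) ^ 2 := by
        rw [mul_pow, mul_pow, sq_sqrt (by positivity)]
        ring

section Register

variable {ι : Type*} {X : ι → Type*} {A : Type*}

/-- The value of the register `R = ((Xᵢ)_{i ∈ C}, A)` at a sample point of `(∏ Xᵢ) × A`. -/
def register (C : Finset ι) (s : (∀ i, X i) × A) : (∀ i : C, X i) × A := (C.restrict s.1, s.2)

/-- The value of the pair `(Xᵢ, R)` at a sample point of `(∏ Xᵢ) × A`. -/
def coordRegister (C : Finset ι) (i : ι) (s : (∀ i, X i) × A) : X i × (∀ i : C, X i) × A :=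
  (s.1 i, register C s)

/-- The density of `⨂ᵢ Qᵢ ⊗ r` on `(∏ Xᵢ) × A`. -/
def productLaw [Fintype ι] (Q : ∀ i, X i → ℝ) (r : A → ℝ) (s : (∀ i, X i) × A) : ℝ :=
  (∏ i, Q i (s.1 i)) * r s.2

variable [Fintype ι] {Q : ∀ i, X i → ℝ} {r : A → ℝ} {p : (∀ i, X i) × A → ℝ}

section Finite

variable [∀ i, Finite (X i)] [Finite A]

lemma coordRegister_ratio_pos (C : Finset ι) (i : ι) (hQ : ∀ i xi, 0 ≤ Q i xi) (hp : ∀ s, 0 ≤ p s)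
    {s : (∀ i, X i) × A} (hs : productLaw Q r s ≠ 0) (hps : 0 < p s) :
    0 < FunOnFinite.map (coordRegister C i) p (coordRegister C i s) /
      (Q i (s.1 i) * FunOnFinite.map (register C) p (register C s)) := by
  have hQi : Q i (s.1 i) ≠ 0 := prod_ne_zero_iff.1 (left_ne_zero_of_mul hs) i (mem_univ i)
  exact div_pos (hps.trans_le (le_funOnFiniteMap_apply _ hp s)) <|
    mul_pos ((hQ i _).lt_of_ne' hQi) (hps.trans_le (le_funOnFiniteMap_apply _ hp s))

lemma map_coordRegister_eq_zero (C : Finset ι) (i : ι) (hp : ∀ s, 0 ≤ p s)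
    (hpQ : ∀ s, productLaw Q r s = 0 → p s = 0) {z : X i × (∀ i : C, X i) × A}
    (hz : Q i z.1 * FunOnFinite.map (register C) p z.2 = 0) :
    FunOnFinite.map (coordRegister C i) p z = 0 := by
  refine funOnFiniteMap_apply_eq_zero ?_
  rintro s rfl
  rcases mul_eq_zero.1 hz with hQi | hR
  · exact hpQ s (mul_eq_zero_of_left (prod_eq_zero (mem_univ i) hQi) _)
  · exact ((le_funOnFiniteMap_apply (register C) hp s).trans_eq hR).antisymm (hp s)

variable [DecidableEq ι]

/-- The law on `(∏ Xᵢ) × A` under which the register `R` has law `⨂_{i ∈ C} Qᵢ ⊗ r` and, given `R`,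
the coordinates `Xᵢ` with `i ∉ C` are independent with the conditional laws `p_{Xᵢ | R}`. Where
`p_R` vanishes the quotient is `0`, so the total mass may be less than `1`. -/
noncomputable def condIndepLaw (C : Finset ι) (Q : ∀ i, X i → ℝ) (r : A → ℝ)
    (p : (∀ i, X i) × A → ℝ) (s : (∀ i, X i) × A) : ℝ :=
  (∏ i : C, Q i (s.1 i)) * r s.2 *
    ∏ i ∈ Cᶜ, FunOnFinite.map (coordRegister C i) p (coordRegister C i s) /
      FunOnFinite.map (register C) p (register C s)

lemma condIndepLaw_nonneg (C : Finset ι) (hQ : ∀ i xi, 0 ≤ Q i xi) (hr : ∀ a, 0 ≤ r a)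
    (hp : ∀ s, 0 ≤ p s) (s : (∀ i, X i) × A) : 0 ≤ condIndepLaw C Q r p s :=
  mul_nonneg (mul_nonneg (prod_nonneg fun _ _ => hQ _ _) (hr _)) <| prod_nonneg fun _ _ =>
    div_nonneg ((hp s).trans (le_funOnFiniteMap_apply _ hp s))
      ((hp s).trans (le_funOnFiniteMap_apply _ hp s))

lemma condIndepLaw_eq_productLaw_mul (C : Finset ι) {s : (∀ i, X i) × A}
    (hs : productLaw Q r s ≠ 0) :
    condIndepLaw C Q r p s = productLaw Q r s *
      ∏ i ∈ Cᶜ, FunOnFinite.map (coordRegister C i) p (coordRegister C i s) /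
        (Q i (s.1 i) * FunOnFinite.map (register C) p (register C s)) := by
  have hQs : ∏ i ∈ Cᶜ, Q i (s.1 i) ≠ 0 :=
    prod_ne_zero_iff.2 fun i _ => prod_ne_zero_iff.1 (left_ne_zero_of_mul hs) i (mem_univ i)
  rw [productLaw, condIndepLaw, ← prod_mul_prod_compl C, prod_coe_sort C fun i => Q i (s.1 i)]
  simp_rw [prod_div_distrib, prod_mul_distrib]
  field_simp

lemma condIndepLaw_ne_zero (C : Finset ι) (hQ : ∀ i xi, 0 ≤ Q i xi) (hp : ∀ s, 0 ≤ p s)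
    {s : (∀ i, X i) × A} (hs : productLaw Q r s ≠ 0) (hps : 0 < p s) :
    condIndepLaw C Q r p s ≠ 0 := by
  rw [condIndepLaw_eq_productLaw_mul C hs]
  exact mul_ne_zero hs (prod_pos fun i _ => coordRegister_ratio_pos C i hQ hp hs hps).ne'

lemma log_div_productLaw_eq (C : Finset ι) (hQ : ∀ i xi, 0 ≤ Q i xi) (hp : ∀ s, 0 ≤ p s)
    {s : (∀ i, X i) × A} (hs : productLaw Q r s ≠ 0) (hps : 0 < p s) :
    log (p s / productLaw Q r s) =
      ∑ i ∈ Cᶜ, log (FunOnFinite.map (coordRegister C i) p (coordRegister C i s) /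
          (Q i (s.1 i) * FunOnFinite.map (register C) p (register C s))) +
        log (p s / condIndepLaw C Q r p s) := by
  have hratio := fun i => (coordRegister_ratio_pos C i hQ hp hs hps).ne'
  rw [log_div hps.ne' hs, log_div hps.ne' (condIndepLaw_ne_zero C hQ hp hs hps),
    condIndepLaw_eq_productLaw_mul C hs, log_mul hs (prod_ne_zero_iff.2 fun i _ => hratio i),
    log_prod fun i _ => hratio i]
  ring

end Finite

variable [DecidableEq ι] [∀ i, Fintype (X i)]

lemma map_register_apply [Finite A] (C : Finset ι) (p : (∀ i, X i) × A → ℝ) (u : ∀ i : C, X i)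
    (a : A) :
    FunOnFinite.map (register C) p (u, a) = ∑ x, if C.restrict x = u then p (x, a) else 0 := by
  have := Fintype.ofFinite A
  simp [FunOnFinite.map_apply_apply, sum_filter, Fintype.sum_prod_type, register, ite_and]

lemma map_coordRegister_apply [Finite A] (C : Finset ι) (i : ι) (p : (∀ i, X i) × A → ℝ) (xi : X i)
    (u : ∀ i : C, X i) (a : A) :
    FunOnFinite.map (coordRegister C i) p (xi, u, a) =
      ∑ x, if C.restrict x = u ∧ x i = xi then p (x, a) else 0 := by
  have := Fintype.ofFinite A
  simp_rw [and_comm (a := C.restrict _ = u)]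
  simp [FunOnFinite.map_apply_apply, sum_filter, Fintype.sum_prod_type, coordRegister, register,
    ite_and]

variable [Fintype A]

lemma sum_mul_prod_compl_le (C : Finset ι) {g : (∀ i : C, X i) → ℝ} (hg : ∀ u, 0 ≤ g u)
    {K : ∀ i, X i → (∀ i : C, X i) → ℝ} (hK : ∀ i xi u, 0 ≤ K i xi u)
    (hK1 : ∀ i u, ∑ xi, K i xi u ≤ 1) :
    ∑ x, g (C.restrict x) * ∏ i ∈ Cᶜ, K i (x i) (C.restrict x) ≤ ∑ u, g u := by
  let e := Equiv.piEquivPiSubtypeProd (· ∈ C) X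
  have hsplit : ∀ u v, g (C.restrict (e.symm (u, v))) *
      ∏ i ∈ Cᶜ, K i (e.symm (u, v) i) (C.restrict (e.symm (u, v))) =
        g u * ∏ i : {i // i ∉ C}, K i (v i) u := by
    intro u v
    have hu : C.restrict (e.symm (u, v)) = u := congrArg Prod.fst (e.apply_symm_apply (u, v))
    have hv : ∀ i : {i // i ∉ C}, e.symm (u, v) i = v i :=
      congrFun (congrArg Prod.snd (e.apply_symm_apply (u, v)))
    simp_rw [hu, prod_subtype Cᶜ (p := (· ∉ C)) (fun _ => mem_compl), hv]
  calc ∑ x, g (C.restrict x) * ∏ i ∈ Cᶜ, K i (x i) (C.restrict x)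
      = ∑ u, g u * ∏ i : {i // i ∉ C}, ∑ xi, K i xi u := by
        rw [← e.symm.sum_comp, Fintype.sum_prod_type]
        simp_rw [hsplit, ← mul_sum, Fintype.prod_sum]
    _ ≤ ∑ u, g u := sum_le_sum fun u _ => mul_le_of_le_one_right (hg u) <|
        prod_le_one (fun i _ => sum_nonneg fun xi _ => hK i xi u) fun i _ => hK1 i u

lemma sum_condIndepLaw_le_one (C : Finset ι) (hQ : ∀ i, Q i ∈ stdSimplex ℝ (X i))
    (hr : r ∈ stdSimplex ℝ A) (hp : p ∈ stdSimplex ℝ ((∀ i, X i) × A)) :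
    ∑ s, condIndepLaw C Q r p s ≤ 1 := by
  have hmap {T : Type _} [Fintype T] (f : (∀ i, X i) × A → T) (t : T) :
      0 ≤ FunOnFinite.map f p t := (funOnFiniteMap_mem_stdSimplex f hp).1 t
  calc ∑ s, condIndepLaw C Q r p s
      ≤ ∑ a, ∑ u : ∀ i : C, X i, (∏ i : C, Q i (u i)) * r a := by
        rw [Fintype.sum_prod_type_right]
        refine sum_le_sum fun a _ => sum_mul_prod_compl_le C
          (g := fun u => (∏ i : C, Q i (u i)) * r a)
          (K := fun i xi u => FunOnFinite.map (coordRegister C i) p (xi, u, a) /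
            FunOnFinite.map (register C) p (u, a))
          (fun u => mul_nonneg (prod_nonneg fun i _ => (hQ i).1 _) (hr.1 a))
          (fun i xi u => div_nonneg (hmap _ _) (hmap _ _)) fun i u => ?_
        rw [← sum_div]
        exact (congrArg (· / _) (sum_funOnFiniteMap_prodMk _ _ p (u, a))).trans_le
          (div_self_le_one _)
    _ = 1 := by
        simp_rw [← sum_mul, ← Fintype.prod_sum, (hQ _).2, prod_const_one, one_mul, hr.2]

lemma relEntropy_productLaw_eq (C : Finset ι) (hQ : ∀ i xi, 0 ≤ Q i xi) (hp : ∀ s, 0 ≤ p s)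
    (hpQ : ∀ s, productLaw Q r s = 0 → p s = 0) :
    relEntropy p (productLaw Q r) =
      ∑ i ∈ Cᶜ, relEntropy (FunOnFinite.map (coordRegister C i) p)
          (fun z => Q i z.1 * FunOnFinite.map (register C) p z.2) +
        relEntropy p (condIndepLaw C Q r p) := by
  simp_rw [relEntropy_funOnFiniteMap]
  rw [sum_comm, relEntropy, relEntropy, ← sum_add_distrib]
  refine sum_congr rfl fun s _ => ?_
  rcases (hp s).eq_or_lt with hps | hps
  · simp [← hps]
  rw [log_div_productLaw_eq C hQ hp (fun h => hps.ne' (hpQ s h)) hps, mul_add, mul_sum]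
  rfl

theorem sum_relEntropy_coordRegister_le (C : Finset ι) (hQ : ∀ i, Q i ∈ stdSimplex ℝ (X i))
    (hr : r ∈ stdSimplex ℝ A) (hp : p ∈ stdSimplex ℝ ((∀ i, X i) × A))
    (hpQ : ∀ s, productLaw Q r s = 0 → p s = 0) :
    ∑ i ∈ Cᶜ, relEntropy (FunOnFinite.map (coordRegister C i) p)
      (fun z => Q i z.1 * FunOnFinite.map (register C) p z.2) ≤ relEntropy p (productLaw Q r) := by
  have hQ0 := fun i => (hQ i).1
  rw [relEntropy_productLaw_eq C hQ0 hp.1 hpQ, le_add_iff_nonneg_right]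
  refine relEntropy_nonneg_of_sum_le hp.1 (condIndepLaw_nonneg C hQ0 hr.1 hp.1) (fun s => ?_)
    ((sum_condIndepLaw_le_one C hQ hr hp).trans_eq hp.2.symm)
  contrapose!
  intro hps
  exact condIndepLaw_ne_zero C hQ0 hp.1 (mt (hpQ s) hps) ((hp.1 s).lt_of_ne' hps)

theorem sq_sum_l1_coordRegister_le (C : Finset ι) (hQ : ∀ i, Q i ∈ stdSimplex ℝ (X i))
    (hr : r ∈ stdSimplex ℝ A) (hp : p ∈ stdSimplex ℝ ((∀ i, X i) × A))
    (hpQ : ∀ s, productLaw Q r s = 0 → p s = 0) :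
    (∑ i ∈ Cᶜ, ∑ z, |FunOnFinite.map (coordRegister C i) p z -
      Q i z.1 * FunOnFinite.map (register C) p z.2|) ^ 2 ≤
        2 * #Cᶜ * relEntropy p (productLaw Q r) := by
  have hpinsker := fun i => sq_sum_abs_sub_le_two_mul_relEntropy
    (funOnFiniteMap_mem_stdSimplex (coordRegister C i) hp)
    (mul_mem_stdSimplex (hQ i) (funOnFiniteMap_mem_stdSimplex (register C) hp))
    fun _ => map_coordRegister_eq_zero C i hp.1 hpQ
  calc _ ≤ #Cᶜ * ∑ i ∈ Cᶜ, 2 * relEntropy (FunOnFinite.map (coordRegister C i) p)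
          (fun z => Q i z.1 * FunOnFinite.map (register C) p z.2) :=
        sq_sum_le_card_mul_sum_sq.trans <| by gcongr with i; exact hpinsker i
    _ ≤ 2 * #Cᶜ * relEntropy p (productLaw Q r) := by
        rw [← mul_sum, mul_left_comm, ← mul_assoc]
        gcongr
        exact sum_relEntropy_coordRegister_le C hQ hr hp hpQ

theorem sum_l1_coordRegister_le_sqrt [Nonempty A] (C : Finset ι)
    (hQ : ∀ i, Q i ∈ stdSimplex ℝ (X i)) (hp : p ∈ stdSimplex ℝ ((∀ i, X i) × A))
    {γ : ℝ} (hγ : 0 < γ) (hpQ : ∀ s, γ * p s ≤ ∏ i, Q i (s.1 i)) :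
    ∑ i ∈ Cᶜ, ∑ z, |FunOnFinite.map (coordRegister C i) p z -
      Q i z.1 * FunOnFinite.map (register C) p z.2| ≤
        √(2 * #Cᶜ * (log (Fintype.card A) + log (1 / γ))) := by
  let r : A → ℝ := fun _ => (Fintype.card A : ℝ)⁻¹
  have hA : (0 : ℝ) < Fintype.card A := mod_cast Fintype.card_pos
  have hr : r ∈ stdSimplex ℝ A := ⟨fun _ => by positivity, by simp [r]⟩
  have hdensity : ∀ s, p s ≤ Fintype.card A * (1 / γ) * productLaw Q r s := fun s => by
    simp only [productLaw, r]
    field_simp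
    linarith [hpQ s]
  have hac : ∀ s, productLaw Q r s = 0 → p s = 0 := fun s hs =>
    (hp.1 s).antisymm' (by simpa [hs] using hdensity s)
  have hlog : relEntropy p (productLaw Q r) ≤ log (Fintype.card A) + log (1 / γ) := by
    rw [← log_mul hA.ne' (one_div_pos.2 hγ).ne']
    exact relEntropy_le_log_of_le_mul hp
      (fun s => mul_nonneg (prod_nonneg fun i _ => (hQ i).1 _) (hr.1 s.2)) hdensity
  refine le_sqrt_of_sq_le ((sq_sum_l1_coordRegister_le C hQ hr hp hac).trans ?_)
  gcongr

theorem avg_l1_single_coordinates_after_conditioning_general [Nonempty A]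
    (hQ : ∀ i, Q i ∈ stdSimplex ℝ (X i)) {P : (∀ i, X i) × A → ℝ} (hP : ∀ s, 0 ≤ P s)
    (hPQ : ∀ s, P s ≤ ∏ i, Q i (s.1 i)) {E : Set ((∀ i, X i) × A)} {γ : ℝ} (hγ : 0 < γ)
    (hPE : ∑ s, (if s ∈ E then P s else 0) = γ)
    (C : Finset ι) (hC : (#C : ℝ) ≤ Fintype.card ι / 2) :
    1 / (Fintype.card ι - #C : ℝ) *
        ∑ i ∈ Cᶜ, ∑ z, |FunOnFinite.map (coordRegister C i) (condOn P E γ) z -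
          Q i z.1 * FunOnFinite.map (register C) (condOn P E γ) z.2| ≤
      2 * √((log (Fintype.card A) + log (1 / γ)) / Fintype.card ι) := by
  have hcard : (#Cᶜ : ℝ) = Fintype.card ι - #C := by
    rw [card_compl, Nat.cast_sub C.card_le_univ]
  rw [← hcard]
  refine one_div_mul_le_two_mul_sqrt_div (Nat.cast_nonneg _) (by linarith)
    (mod_cast card_le_univ _) ?_
  exact sum_l1_coordRegister_le_sqrt C hQ (condOn_mem_stdSimplex hP hγ hPE) hγ
    fun s => (mul_condOn_le hP hγ s).trans (hPQ s)

end Register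

end

/-- **Average ℓ₁ closeness of single coordinates after conditioning** (classical form of
condition 1 of the key lemma of the direct product theorem).
`P'` is `P` conditioned on the event `E` (of probability `γ`); the combined register
`R = ((Xᵢ)_{i ∈ C}, 𝒜)` ranges over pairs `(xc, a)` with `xc : ∀ i ∈ C, X i`;
`PR'` is the marginal of `P'` on `R` and `PiR i` is its marginal on `Xᵢ × R`. -/
theorem avg_l1_single_coordinates_after_conditioning
    {n : ℕ} (X : Fin n → Type*) [∀ i, Fintype (X i)] [∀ i, Nonempty (X i)]
    {A : Type*} [Fintype A] [Nonempty A]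
    (Q : ∀ i, X i → ℝ) (hQ0 : ∀ i xi, 0 ≤ Q i xi) (hQ1 : ∀ i, ∑ xi, Q i xi = 1)
    (P : ((∀ i, X i) × A) → ℝ) (hP0 : ∀ s, 0 ≤ P s) (hP1 : ∑ s, P s = 1)
    (hmarg : ∀ x : ∀ i, X i, (∑ a, P (x, a)) = ∏ i, Q i (x i))
    (E : Set ((∀ i, X i) × A)) (γ : ℝ) (hγ : 0 < γ)
    (hPE : ∑ s, (if s ∈ E then P s else 0) = γ)
    (C : Finset (Fin n)) (hC : (C.card : ℝ) ≤ (n : ℝ) / 2) :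
    let P' : ((∀ i, X i) × A) → ℝ := fun s => if s ∈ E then P s / γ else 0
    let restr : (∀ i, X i) → (∀ i : {i // i ∈ C}, X i.1) := fun x i => x i.1
    let PR' : (∀ i : {i // i ∈ C}, X i.1) → A → ℝ :=
      fun xc a => ∑ x, if restr x = xc then P' (x, a) else 0
    let PiR : ∀ i : Fin n, X i → (∀ j : {j // j ∈ C}, X j.1) → A → ℝ :=
      fun i xi xc a => ∑ x, if restr x = xc ∧ x i = xi then P' (x, a) else 0
    let δ : ℝ := (Real.log (Fintype.card A) + Real.log (1 / γ)) / n
    (1 / ((n : ℝ) - C.card)) *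
        ∑ i ∈ Cᶜ, ∑ xi, ∑ xc, ∑ a, |PiR i xi xc a - Q i xi * PR' xc a| ≤
      2 * Real.sqrt δ := by
  have hPQ (s) : P s ≤ ∏ i, Q i (s.1 i) := hmarg s.1 ▸
    Finset.single_le_sum (f := fun a => P (s.1, a)) (fun _ _ => hP0 _) (Finset.mem_univ s.2)
  have hmain := avg_l1_single_coordinates_after_conditioning_general (fun i => ⟨hQ0 i, hQ1 i⟩)
    hP0 hPQ hγ hPE C (by rwa [Fintype.card_fin])
  simp_rw [Fintype.sum_prod_type, map_coordRegister_apply, map_register_apply,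
    Fintype.card_fin] at hmain
  exact hmain
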